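/- Geometry preservation (margin and radius together): in the SVM dual setup with data matrix X ∈ ℝ^{n×d} whose rows are x_1^T,…,x_n^T, let ε ∈ (0,1). Let X = UΣV^T be a compact singular value decomposition of X of rank ρ, and let x_B ∈ ℝ^d and B > 0 satisfy ‖x_i − x_B‖₂ ≤ B for all i; let X_B ∈ ℝ^{(n+1)×d} have rows x_1^T,…,x_n^T, x_B^T with compact singular value decomposition X_B = U_B Σ_B V_B^T of rank ρ_B. Let R ∈ ℝ^{d×r} satisfy ‖I_ρ − V^T R R^T V‖₂ ≤ ε/2 and ‖I_{ρ_B} − V_B^T R R^T V_B‖₂ ≤ ε. Suppose α* ∈ K maximizes f over K, α̃* ∈ K maximizes f̃ over K, the identities Σ_i α*_i = ‖X^T Y α*‖₂² and Σ_i α̃*_i = ‖R^T X^T Y α̃*‖₂² hold, and set w* = X^T Y α* ≠ 0 and w̃* = R^T X^T Y α̃* ≠ 0. Let B̃ = max_{1≤i≤n} ‖R^T x_i − R^T x_B‖₂. Then, with margins γ* = 1/‖w*‖₂ and γ̃* = 1/‖w̃*‖₂, one has B̃²/(γ̃*)² ≤ ((1 + ε)/(1 − ε)) · B²/(γ*)².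 -/

import Mathlib

open Matrix

/-- Euclidean norm of a vector in ℝ^n. -/
noncomputable def euclNorm {n : ℕ} (x : Fin n → ℝ) : ℝ := Real.sqrt (∑ i, x i ^ 2)

/-- Spectral norm (ℓ₂ operator norm) of a real matrix: the supremum of `‖A x‖₂`
over unit vectors `x`. -/
noncomputable def specNorm {m n : ℕ} (A : Matrix (Fin m) (Fin n) ℝ) : ℝ :=
  sSup {c : ℝ | ∃ x : Fin n → ℝ, euclNorm x = 1 ∧ c = euclNorm (A.mulVec x)}

/-- The SVM dual feasible set `K = {α : 0 ≤ αᵢ ≤ C, Σᵢ yᵢαᵢ = 0}`. -/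
def svmFeasible {p : ℕ} (y : Fin p → ℝ) (C : ℝ) (α : Fin p → ℝ) : Prop :=
  (∀ i, 0 ≤ α i ∧ α i ≤ C) ∧ ∑ i, y i * α i = 0

/-- The SVM dual objective `f(α) = Σᵢ αᵢ − (1/2)‖XᵀYα‖₂²`, where `Y = diag(y)`. -/
noncomputable def svmDualObj {p d : ℕ} (X : Matrix (Fin p) (Fin d) ℝ) (y : Fin p → ℝ)
    (α : Fin p → ℝ) : ℝ :=
  ∑ i, α i - (1 / 2) * euclNorm (Xᵀ.mulVec ((Matrix.diagonal y).mulVec α)) ^ 2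

/-- The reduced SVM dual objective `f̃(α) = Σᵢ αᵢ − (1/2)‖RᵀXᵀYα‖₂²`. -/
noncomputable def svmDualObjRed {p d r : ℕ} (X : Matrix (Fin p) (Fin d) ℝ)
    (R : Matrix (Fin d) (Fin r) ℝ) (y : Fin p → ℝ) (α : Fin p → ℝ) : ℝ :=
  ∑ i, α i - (1 / 2) * euclNorm (Rᵀ.mulVec (Xᵀ.mulVec ((Matrix.diagonal y).mulVec α))) ^ 2

/-!
For `V` with orthonormal columns, `‖Vz‖² - ‖RᵀVz‖² = zᵀ(1 - VᵀRRᵀV)z`, so the spectral bounds say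
that `Rᵀ` nearly preserves squared norms on the row spaces of the two data matrices. On the
augmented row space, which contains every `x i - xB`, this bounds the projected radius. For the
margins, the optimality identities turn `f(α̃*) ≤ f(α*)` into `2‖w̃*‖² - ‖XᵀYα̃*‖² ≤ ‖w*‖²`, and
`‖XᵀYα̃*‖²` is at most `(1 + ε)‖w̃*‖²`.
-/

section EuclideanNorm

variable {m n : ℕ}

lemma euclNorm_eq_norm_toLp (x : Fin n → ℝ) : euclNorm x = ‖WithLp.toLp 2 x‖ := by
  simp [euclNorm, EuclideanSpace.norm_eq]

lemma euclNorm_nonneg (x : Fin n → ℝ) : 0 ≤ euclNorm x := Real.sqrt_nonneg _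

lemma euclNorm_sq (x : Fin n → ℝ) : euclNorm x ^ 2 = x ⬝ᵥ x := by
  rw [euclNorm_eq_norm_toLp, EuclideanSpace.real_norm_sq_eq]
  simp only [dotProduct, sq]

lemma euclNorm_mulVec_sq (A : Matrix (Fin m) (Fin n) ℝ) (x : Fin n → ℝ) :
    euclNorm (A *ᵥ x) ^ 2 = x ⬝ᵥ (Aᵀ * A) *ᵥ x := by
  rw [euclNorm_sq, dotProduct_mulVec, ← mulVec_transpose, mulVec_mulVec, dotProduct_comm]

lemma abs_dotProduct_le_euclNorm_mul (x y : Fin n → ℝ) :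
    |x ⬝ᵥ y| ≤ euclNorm x * euclNorm y := by
  simpa only [euclNorm_eq_norm_toLp, EuclideanSpace.inner_toLp_toLp, star_trivial,
    dotProduct_comm y] using abs_real_inner_le_norm (WithLp.toLp 2 x) (WithLp.toLp 2 y)

open scoped Matrix.Norms.L2Operator in
lemma specNorm_eq_l2_opNorm (A : Matrix (Fin m) (Fin n) ℝ) : specNorm A = ‖A‖ := by
  have le_opNorm : ∀ c ∈ {c : ℝ | ∃ x : Fin n → ℝ, euclNorm x = 1 ∧ c = euclNorm (A *ᵥ x)},
      c ≤ ‖A‖ := by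
    rintro _ ⟨x, hx, rfl⟩
    rw [euclNorm_eq_norm_toLp] at hx ⊢
    simpa [hx] using A.l2_opNorm_mulVec (WithLp.toLp 2 x)
  refine le_antisymm (Real.sSup_le le_opNorm (norm_nonneg A)) ?_
  refine ContinuousLinearMap.opNorm_le_of_unit_norm (Real.sSup_nonneg ?_) fun x hx => ?_
  · rintro _ ⟨x, -, rfl⟩
    exact euclNorm_nonneg _
  · exact le_csSup ⟨‖A‖, le_opNorm⟩
      ⟨x.ofLp, by rwa [euclNorm_eq_norm_toLp], (euclNorm_eq_norm_toLp _).symm⟩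

lemma euclNorm_mulVec_le (A : Matrix (Fin m) (Fin n) ℝ) (x : Fin n → ℝ) :
    euclNorm (A *ᵥ x) ≤ specNorm A * euclNorm x := by
  rw [specNorm_eq_l2_opNorm, euclNorm_eq_norm_toLp, euclNorm_eq_norm_toLp]
  exact A.l2_opNorm_mulVec (WithLp.toLp 2 x)

lemma euclNorm_mulVec_of_transpose_mul_self {V : Matrix (Fin m) (Fin n) ℝ} (hV : Vᵀ * V = 1)
    (x : Fin n → ℝ) : euclNorm (V *ᵥ x) = euclNorm x := by
  rw [← sq_eq_sq₀ (euclNorm_nonneg _) (euclNorm_nonneg _), euclNorm_mulVec_sq, hV, one_mulVec,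
    euclNorm_sq]

lemma abs_euclNorm_sq_sub_euclNorm_mulVec_sq_le (A : Matrix (Fin m) (Fin n) ℝ) (x : Fin n → ℝ) :
    |euclNorm x ^ 2 - euclNorm (A *ᵥ x) ^ 2| ≤ specNorm (1 - Aᵀ * A) * euclNorm x ^ 2 := by
  calc |euclNorm x ^ 2 - euclNorm (A *ᵥ x) ^ 2|
      = |x ⬝ᵥ (1 - Aᵀ * A) *ᵥ x| := by
        rw [euclNorm_sq, euclNorm_mulVec_sq, sub_mulVec, one_mulVec, dotProduct_sub]
    _ ≤ euclNorm x * euclNorm ((1 - Aᵀ * A) *ᵥ x) := abs_dotProduct_le_euclNorm_mul _ _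
    _ ≤ euclNorm x * (specNorm (1 - Aᵀ * A) * euclNorm x) :=
        mul_le_mul_of_nonneg_left (euclNorm_mulVec_le _ _) (euclNorm_nonneg x)
    _ = specNorm (1 - Aᵀ * A) * euclNorm x ^ 2 := by ring

end EuclideanNorm

/-- `R` is a `δ`-subspace embedding for the row space of `Z`: the map `v ↦ Rᵀ v` distorts squared
Euclidean norms there by a relative error of at most `δ`. Vectors of the row space are written
as `Zᵀ u`. -/
def IsRowSpaceEmbedding {m d r : ℕ} (R : Matrix (Fin d) (Fin r) ℝ) (Z : Matrix (Fin m) (Fin d) ℝ)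
    (δ : ℝ) : Prop :=
  ∀ u, |euclNorm (Zᵀ *ᵥ u) ^ 2 - euclNorm (Rᵀ *ᵥ Zᵀ *ᵥ u) ^ 2| ≤ δ * euclNorm (Zᵀ *ᵥ u) ^ 2

namespace IsRowSpaceEmbedding

variable {m n d r k : ℕ} {R : Matrix (Fin d) (Fin r) ℝ} {δ : ℝ}

lemma of_specNorm_le {V : Matrix (Fin d) (Fin k) ℝ} (hV : Vᵀ * V = 1)
    (hR : specNorm (1 - Vᵀ * R * Rᵀ * V) ≤ δ) (M : Matrix (Fin m) (Fin k) ℝ) :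
    IsRowSpaceEmbedding R (M * Vᵀ) δ := by
  intro u
  have hrow : (M * Vᵀ)ᵀ *ᵥ u = V *ᵥ Mᵀ *ᵥ u := by
    rw [transpose_mul, transpose_transpose, mulVec_mulVec]
  have hgram : (Rᵀ * V)ᵀ * (Rᵀ * V) = Vᵀ * R * Rᵀ * V := by
    simp only [transpose_mul, transpose_transpose, Matrix.mul_assoc]
  rw [hrow, euclNorm_mulVec_of_transpose_mul_self hV, mulVec_mulVec _ Rᵀ V]
  refine (abs_euclNorm_sq_sub_euclNorm_mulVec_sq_le (Rᵀ * V) (Mᵀ *ᵥ u)).trans ?_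
  rw [hgram]
  gcongr

lemma euclNorm_row_sub_row_sq_le {z : Fin m → Fin d → ℝ} (hR : IsRowSpaceEmbedding R (of z) δ)
    (i j : Fin m) :
    euclNorm (Rᵀ *ᵥ z i - Rᵀ *ᵥ z j) ^ 2 ≤ (1 + δ) * euclNorm (z i - z j) ^ 2 := by
  have hrow : (of z)ᵀ *ᵥ (Pi.single i 1 - Pi.single j 1) = z i - z j := by
    rw [mulVec_sub, mulVec_single_one, mulVec_single_one]
    rfl
  have hlower := (abs_le.1 (hR (Pi.single i 1 - Pi.single j 1))).1
  rw [hrow, mulVec_sub] at hlower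
  linarith

lemma iSup_euclNorm_sub_sq_le {x : Fin n → Fin d → ℝ} {c : Fin d → ℝ} {B : ℝ}
    (hR : IsRowSpaceEmbedding R (of (Fin.snoc x c)) δ) (hδ : 0 ≤ δ)
    (hball : ∀ i, euclNorm (x i - c) ≤ B) :
    (⨆ i, euclNorm (Rᵀ *ᵥ x i - Rᵀ *ᵥ c)) ^ 2 ≤ (1 + δ) * B ^ 2 := by
  have hdist : ∀ i, euclNorm (Rᵀ *ᵥ x i - Rᵀ *ᵥ c) ≤ √((1 + δ) * B ^ 2) := fun i => by
    refine Real.le_sqrt_of_sq_le ?_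
    calc euclNorm (Rᵀ *ᵥ x i - Rᵀ *ᵥ c) ^ 2
        ≤ (1 + δ) * euclNorm (x i - c) ^ 2 := by
          simpa only [Fin.snoc_castSucc, Fin.snoc_last] using
            hR.euclNorm_row_sub_row_sq_le i.castSucc (Fin.last n)
      _ ≤ (1 + δ) * B ^ 2 := by
          have := euclNorm_nonneg (x i - c)
          gcongr
          exact hball i
  calc (⨆ i, euclNorm (Rᵀ *ᵥ x i - Rᵀ *ᵥ c)) ^ 2
      ≤ √((1 + δ) * B ^ 2) ^ 2 :=
        pow_le_pow_left₀ (Real.iSup_nonneg fun _ => euclNorm_nonneg _)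
          (Real.iSup_le hdist (Real.sqrt_nonneg _)) 2
    _ = (1 + δ) * B ^ 2 := Real.sq_sqrt (by positivity)

lemma euclNorm_sq_le {Z : Matrix (Fin m) (Fin d) ℝ} (hR : IsRowSpaceEmbedding R Z δ)
    (hδ₀ : 0 ≤ δ) (hδ : δ ≤ 1 / 2) (u : Fin m → ℝ) :
    euclNorm (Zᵀ *ᵥ u) ^ 2 ≤ (1 + 2 * δ) * euclNorm (Rᵀ *ᵥ Zᵀ *ᵥ u) ^ 2 := by
  have hupper := (abs_le.1 (hR u)).2
  have hdouble : euclNorm (Zᵀ *ᵥ u) ^ 2 ≤ 2 * euclNorm (Rᵀ *ᵥ Zᵀ *ᵥ u) ^ 2 := by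
    linarith [mul_le_mul_of_nonneg_right hδ (sq_nonneg (euclNorm (Zᵀ *ᵥ u)))]
  linarith [mul_le_mul_of_nonneg_left hdouble hδ₀]

lemma one_sub_mul_euclNorm_reduced_sq_le {X : Matrix (Fin n) (Fin d) ℝ} {y α β : Fin n → ℝ}
    (hR : IsRowSpaceEmbedding R X δ) (hδ₀ : 0 ≤ δ) (hδ : δ ≤ 1 / 2)
    (hobj : svmDualObj X y β ≤ svmDualObj X y α)
    (hα : ∑ i, α i = euclNorm (Xᵀ *ᵥ diagonal y *ᵥ α) ^ 2)
    (hβ : ∑ i, β i = euclNorm (Rᵀ *ᵥ Xᵀ *ᵥ diagonal y *ᵥ β) ^ 2) :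
    (1 - 2 * δ) * euclNorm (Rᵀ *ᵥ Xᵀ *ᵥ diagonal y *ᵥ β) ^ 2
      ≤ euclNorm (Xᵀ *ᵥ diagonal y *ᵥ α) ^ 2 := by
  have hembed := hR.euclNorm_sq_le hδ₀ hδ (diagonal y *ᵥ β)
  unfold svmDualObj at hobj
  rw [hα, hβ] at hobj
  linarith

end IsRowSpaceEmbedding

theorem svm_geometry_preservation_general {n d r : ℕ} {ε : ℝ} (hε₀ : 0 ≤ ε) (hε₁ : ε < 1)
    {x : Fin n → Fin d → ℝ} {xB : Fin d → ℝ} {B : ℝ}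
    (henc : ∀ i, euclNorm (x i - xB) ≤ B) {R : Matrix (Fin d) (Fin r) ℝ}
    (hR : IsRowSpaceEmbedding R (of x) (ε / 2))
    (hRB : IsRowSpaceEmbedding R (of (Fin.snoc x xB)) ε) {y αs αt : Fin n → ℝ}
    (hobj : svmDualObj (of x) y αt ≤ svmDualObj (of x) y αs)
    (hαs : ∑ i, αs i = euclNorm ((of x)ᵀ *ᵥ diagonal y *ᵥ αs) ^ 2)
    (hαt : ∑ i, αt i = euclNorm (Rᵀ *ᵥ (of x)ᵀ *ᵥ diagonal y *ᵥ αt) ^ 2) :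
    (⨆ i, euclNorm (Rᵀ *ᵥ x i - Rᵀ *ᵥ xB)) ^ 2
        * euclNorm (Rᵀ *ᵥ (of x)ᵀ *ᵥ diagonal y *ᵥ αt) ^ 2
      ≤ (1 + ε) / (1 - ε) * (B ^ 2 * euclNorm ((of x)ᵀ *ᵥ diagonal y *ᵥ αs) ^ 2) := by
  have hradius := hRB.iSup_euclNorm_sub_sq_le hε₀ henc
  have hweight := hR.one_sub_mul_euclNorm_reduced_sq_le (by linarith) (by linarith) hobj hαs hαt
  have hpos : 0 < 1 - ε := sub_pos.2 hε₁
  rw [mul_div_cancel₀ ε two_ne_zero, ← le_div_iff₀' hpos] at hweight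
  refine (mul_le_mul hradius hweight (sq_nonneg _) (by positivity)).trans_eq ?_
  ring

/-- **Theorem 3 (geometry preservation: margin and radius together).**
In the SVM dual setup with data matrix `X ∈ ℝ^{n×d}` (rows `x_i`), compact SVD
`X = UΣVᵀ` of rank `ρ`, enclosing ball of center `x_B` and radius `B > 0`,
and augmented matrix `X_B` (rows `x_1,…,x_n,x_B`) with compact SVD
`X_B = U_B Σ_B V_Bᵀ` of rank `ρ_B`: if `‖I_ρ − VᵀRRᵀV‖₂ ≤ ε/2` and
`‖I_{ρ_B} − V_BᵀRRᵀV_B‖₂ ≤ ε`, and `α*`, `α̃*` are dual maximizers satisfying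
the optimality identities with `w* = XᵀYα* ≠ 0` and `w̃* = RᵀXᵀYα̃* ≠ 0`, then
with `B̃ = maxᵢ ‖Rᵀx_i − Rᵀx_B‖₂`, `γ* = 1/‖w*‖₂`, `γ̃* = 1/‖w̃*‖₂` one has
`B̃²/(γ̃*)² ≤ ((1+ε)/(1−ε))·B²/(γ*)²`. -/
theorem svm_geometry_preservation
    (n d r ρ ρB : ℕ) (ε : ℝ) (hε : ε ∈ Set.Ioo (0 : ℝ) 1)
    (x : Fin n → Fin d → ℝ)
    (X : Matrix (Fin n) (Fin d) ℝ) (hXdef : X = Matrix.of x) (hrank : X.rank = ρ)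
    (U : Matrix (Fin n) (Fin ρ) ℝ) (S : Matrix (Fin ρ) (Fin ρ) ℝ)
    (V : Matrix (Fin d) (Fin ρ) ℝ)
    (hU : Uᵀ * U = 1) (hV : Vᵀ * V = 1)
    (hS : ∃ σ : Fin ρ → ℝ, (∀ i, 0 < σ i) ∧ S = Matrix.diagonal σ)
    (hX : X = U * S * Vᵀ)
    (xB : Fin d → ℝ) (B : ℝ) (hB : 0 < B)
    (henc : ∀ i, euclNorm (x i - xB) ≤ B)
    (XB : Matrix (Fin (n + 1)) (Fin d) ℝ) (hXB : XB = Matrix.of (Fin.snoc x xB))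
    (hrankB : XB.rank = ρB)
    (UB : Matrix (Fin (n + 1)) (Fin ρB) ℝ) (SB : Matrix (Fin ρB) (Fin ρB) ℝ)
    (VB : Matrix (Fin d) (Fin ρB) ℝ)
    (hUB : UBᵀ * UB = 1) (hVB : VBᵀ * VB = 1)
    (hSB : ∃ σ : Fin ρB → ℝ, (∀ i, 0 < σ i) ∧ SB = Matrix.diagonal σ)
    (hXBsvd : XB = UB * SB * VBᵀ)
    (R : Matrix (Fin d) (Fin r) ℝ)
    (hE : specNorm ((1 : Matrix (Fin ρ) (Fin ρ) ℝ) - Vᵀ * R * Rᵀ * V) ≤ ε / 2)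
    (hEB : specNorm ((1 : Matrix (Fin ρB) (Fin ρB) ℝ) - VBᵀ * R * Rᵀ * VB) ≤ ε)
    (y : Fin n → ℝ) (hy : ∀ i, y i = 1 ∨ y i = -1)
    (C : ℝ) (hC : 0 < C)
    (αs : Fin n → ℝ) (hαs : svmFeasible y C αs)
    (hαsmax : ∀ β, svmFeasible y C β → svmDualObj X y β ≤ svmDualObj X y αs)
    (hid1 : ∑ i, αs i = euclNorm (Xᵀ.mulVec ((Matrix.diagonal y).mulVec αs)) ^ 2)
    (αt : Fin n → ℝ) (hαt : svmFeasible y C αt)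
    (hαtmax : ∀ β, svmFeasible y C β → svmDualObjRed X R y β ≤ svmDualObjRed X R y αt)
    (hid2 : ∑ i, αt i
      = euclNorm (Rᵀ.mulVec (Xᵀ.mulVec ((Matrix.diagonal y).mulVec αt))) ^ 2)
    (hw : Xᵀ.mulVec ((Matrix.diagonal y).mulVec αs) ≠ 0)
    (hwt : Rᵀ.mulVec (Xᵀ.mulVec ((Matrix.diagonal y).mulVec αt)) ≠ 0) :
    (⨆ i : Fin n, euclNorm (Rᵀ.mulVec (x i) - Rᵀ.mulVec xB)) ^ 2
        / (1 / euclNorm (Rᵀ.mulVec (Xᵀ.mulVec ((Matrix.diagonal y).mulVec αt)))) ^ 2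
      ≤ ((1 + ε) / (1 - ε))
          * (B ^ 2 / (1 / euclNorm (Xᵀ.mulVec ((Matrix.diagonal y).mulVec αs))) ^ 2) := by
  have hR : IsRowSpaceEmbedding R X (ε / 2) := hX ▸ .of_specNorm_le hV hE (U * S)
  have hRB : IsRowSpaceEmbedding R XB ε := hXBsvd ▸ .of_specNorm_le hVB hEB (UB * SB)
  rw [hXdef] at hR hαsmax hid1 hid2 ⊢
  rw [hXB] at hRB
  simpa only [one_div, inv_pow, div_inv_eq_mul] using
    svm_geometry_preservation_general hε.1.le hε.2 henc hR hRB (hαsmax αt hαt) hid1 hid2
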